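/- Let k, m ≥ 2, q = ⌈k/m⌉, and n ≥ k + q. For every ℓ with q ≤ ℓ ≤ ⌊(n−1)/2⌋, one has C_{k,ℓ} ≥ C_{k, n−ℓ}. -/

import Mathlib

def C (m k ℓ : ℕ) : ℕ :=
  (Finset.univ.filter (fun f : Fin ℓ → Fin m => ∑ i, ((f i : ℕ) + 1) = k)).card

open Polynomial in
/-- The compositions polynomials. -/
noncomputable def QQ (m : ℕ) : ℕ → ℤ[X]
  | 0 => 1
  | (k+1) => ∑ j ∈ Finset.range m, if _h : j ≤ k then X ^ j * QQ m (k - j) else 0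
termination_by k => k

open Polynomial in
/-- Nonnegative coefficients with the flawless inequalities up to `D`. -/
def FF (D : ℕ) (p : ℤ[X]) : Prop :=
  (∀ s, 0 ≤ p.coeff s) ∧ ∀ s t, s ≤ t → s + t ≤ D → p.coeff s ≤ p.coeff t

section
open Polynomial hiding C

lemma FF.mono {D E : ℕ} {p : ℤ[X]} (h : FF D p) (hE : E ≤ D) : FF E p :=
  ⟨h.1, fun s t a b => h.2 s t a (by omega)⟩

lemma FF.add {D : ℕ} {p q : ℤ[X]} (h : FF D p) (h' : FF D q) : FF D (p + q) := by
  refine ⟨fun s => ?_, fun s t a b => ?_⟩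
  · rw [coeff_add]; exact add_nonneg (h.1 s) (h'.1 s)
  · rw [coeff_add, coeff_add]; exact add_le_add (h.2 s t a b) (h'.2 s t a b)

lemma FF.zero (D : ℕ) : FF D 0 := by
  constructor <;> simp

lemma FF.sum {ι : Type} {D : ℕ} (S : Finset ι) (f : ι → ℤ[X]) (h : ∀ i ∈ S, FF D (f i)) :
    FF D (∑ i ∈ S, f i) := by
  classical
  induction S using Finset.induction_on with
  | empty => simpa using FF.zero D
  | insert a S ha ih =>
    rw [Finset.sum_insert ha]
    exact (h a (by simp)).add (ih fun i hi => h i (by simp [hi]))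

lemma FF.X_mul {D : ℕ} {p : ℤ[X]} (h : FF D p) : FF (D + 2) (X * p) := by
  refine ⟨fun s => ?_, fun s t a b => ?_⟩
  · cases s with
    | zero => simp
    | succ s => rw [coeff_X_mul]; exact h.1 s
  · cases s with
    | zero =>
      cases t with
      | zero => simp
      | succ t => rw [coeff_X_mul]; simpa using h.1 t
    | succ s =>
      cases t with
      | zero => omega
      | succ t => rw [coeff_X_mul, coeff_X_mul]; exact h.2 s t (by omega) (by omega)

lemma FF.X_pow_mul {D : ℕ} {p : ℤ[X]} (h : FF D p) (j : ℕ) : FF (D + 2 * j) (X ^ j * p) := by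
  induction j with
  | zero => simpa using h
  | succ j ih =>
    have := ih.X_mul
    rw [pow_succ', mul_assoc]
    exact this.mono (by omega)

lemma FF.one_add_mul {D : ℕ} {p : ℤ[X]} (h : FF D p) : FF (D + 1) ((1 + X) * p) := by
  rw [add_mul, one_mul]
  refine ⟨fun s => ?_, fun s t a b => ?_⟩
  · cases s with
    | zero => simpa using h.1 0
    | succ s =>
      rw [coeff_add, coeff_X_mul]; exact add_nonneg (h.1 _) (h.1 s)
  · rcases a.eq_or_lt with rfl | a
    · exact le_rfl
    obtain ⟨t, rfl⟩ : ∃ u, t = u + 1 := ⟨t - 1, by omega⟩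
    have h1 := h.2 s t (by omega) (by omega)
    cases s with
    | zero =>
      rw [coeff_add, coeff_add, coeff_X_mul]
      have := h.1 (t + 1)
      simp only [mul_coeff_zero, coeff_X_zero, zero_mul]
      linarith
    | succ s =>
      rw [coeff_add, coeff_add, coeff_X_mul, coeff_X_mul]
      have := h.2 s (t + 1) (by omega) (by omega)
      linarith

lemma FF.one_add_pow_mul {D : ℕ} {p : ℤ[X]} (h : FF D p) (j : ℕ) :
    FF (D + j) ((1 + X) ^ j * p) := by
  induction j with
  | zero => simpa using h
  | succ j ih =>
    rw [pow_succ', mul_assoc]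
    exact ih.one_add_mul

lemma QQ_succ (m k : ℕ) :
    QQ m (k + 1) = ∑ j ∈ Finset.range m, if j ≤ k then X ^ j * QQ m (k - j) else 0 := by
  rw [QQ]; simp

lemma QQ_rec (d n : ℕ) :
    QQ (d+1) (n + 2) + (if d ≤ n then X ^ (d+1) * QQ (d+1) (n - d) else 0)
      = (1 + X) * QQ (d+1) (n + 1) := by
  have h1 : X * QQ (d+1) (n + 1) = ∑ j ∈ Finset.range (d+1),
      if j + 1 ≤ n + 1 then X ^ (j+1) * QQ (d+1) (n + 1 - (j + 1)) else 0 := by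
    rw [QQ_succ, Finset.mul_sum]
    refine Finset.sum_congr rfl fun j _ => ?_
    by_cases h : j ≤ n
    · simp [h, pow_succ', mul_assoc]
    · simp [h]
  rw [add_mul, one_mul, h1, QQ_succ (d+1) (n+1), Finset.sum_range_succ', Finset.sum_range_succ]
  simp
  ring

lemma QQ_FF (d c : ℕ) : ∀ i ≤ d, FF (c * d + i) (QQ (d+1) (c * (d+1) + 1 + i)) := by
  induction c with
  | zero =>
    intro i
    induction i with
    | zero =>
      intro _
      have : QQ (d+1) (0 * (d+1) + 1 + 0) = 1 := by
        rw [show 0 * (d+1) + 1 + 0 = 0 + 1 by ring, QQ_succ, Finset.sum_range_succ']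
        simp [QQ]
      rw [this]
      refine ⟨fun s => ?_, fun s t a b => ?_⟩
      · rw [coeff_one]; split_ifs <;> simp
      · have : s = t := by omega
        rw [this]
    | succ i ih =>
      intro hi
      have h := (ih (by omega)).one_add_mul
      have h2 := QQ_rec d i
      rw [if_neg (by omega), add_zero] at h2
      rw [show 0 * (d+1) + 1 + (i+1) = i + 2 by ring, h2]
      rw [show 0 * (d+1) + 1 + i = i + 1 by ring] at h
      exact h
  | succ c H =>
    set Z : ℕ → ℤ[X] := fun i => ∑ h ∈ Finset.Ico i d, X ^ (i + d - h) * QQ (d+1) (c * (d+1) + 1 + h)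
      with hZ
    have ZF : ∀ i, FF ((c+1) * d + 1 + 2 * i) (Z i) := by
      intro i
      refine FF.sum _ _ fun h hh => ?_
      rw [Finset.mem_Ico] at hh
      refine ((H h (by omega)).X_pow_mul (i + d - h)).mono ?_
      rw [add_mul]
      omega
    have ZR : ∀ i < d, Z (i+1) + X ^ (d+1) * QQ (d+1) (c * (d+1) + 1 + i) = X * Z i := by
      intro i hi
      simp only [hZ]
      rw [Finset.sum_eq_sum_Ico_succ_bot hi, mul_add X, Finset.mul_sum, add_comm]
      congr 1
      · rw [show i + d - i = d by omega]; ring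
      · refine Finset.sum_congr rfl fun h hh => ?_
        rw [Finset.mem_Ico] at hh
        rw [show i + 1 + d - h = (i + d - h) + 1 by omega]; ring
    have key : ∀ i ≤ d, ∃ S, FF ((c+1) * d + i) S ∧ QQ (d+1) ((c+1) * (d+1) + 1 + i) =
        (1 + X) ^ i * QQ (d+1) (c * (d+1) + 1 + d) + Z i + S := by
      intro i
      induction i with
      | zero =>
        intro _
        refine ⟨0, FF.zero _, ?_⟩
        rw [add_zero, add_zero, QQ_succ, Finset.sum_range_succ', add_comm, pow_zero, one_mul]
        congr 1
        · simp only [Nat.zero_le, if_true, pow_zero, one_mul]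
          congr 1
          rw [Nat.sub_zero]; ring
        · simp only [hZ]
          rw [← Finset.sum_range_reflect, Finset.range_eq_Ico]
          refine Finset.sum_congr rfl fun h hh => ?_
          rw [Finset.mem_Ico] at hh
          have e : (c+1) * (d+1) = c * (d+1) + d + 1 := by ring
          rw [if_pos (by omega)]
          congr 2 <;> omega
      | succ i ih =>
        intro hi
        obtain ⟨S, hS, hQ⟩ := ih (by omega)
        refine ⟨(1 + X) * S + Z i, ?_, ?_⟩
        · exact hS.one_add_mul.add ((ZF i).mono (by omega))
        · have h1 := QQ_rec d ((c+1) * (d+1) + i)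
          have e : (c+1) * (d+1) = c * (d+1) + d + 1 := by ring
          rw [if_pos (by omega), show (c+1) * (d+1) + i - d = c * (d+1) + 1 + i by omega,
            show (c+1) * (d+1) + i + 1 = (c+1) * (d+1) + 1 + i by omega, hQ] at h1
          rw [show (c+1) * (d+1) + 1 + (i + 1) = (c+1) * (d+1) + i + 2 by omega]
          have h2 := ZR i (by omega)
          linear_combination h1 - h2
    intro i hi
    obtain ⟨S, hS, hQ⟩ := key i hi
    rw [hQ]
    refine (FF.add ?_ ((ZF i).mono (by omega))).add hS
    have := (H d le_rfl).one_add_pow_mul i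
    rw [add_mul, one_mul]
    exact this

lemma C_succ (m k L : ℕ) :
    C m (k + 1) (L + 1) = ∑ j ∈ Finset.range m, if j ≤ k then C m (k - j) L else 0 := by
  unfold C
  rw [Finset.card_filter, ← (Fin.consEquiv (fun _ => Fin m)).sum_comp, Fintype.sum_prod_type,
    Finset.sum_range]
  refine Finset.sum_congr rfl fun j _ => ?_
  split_ifs with h
  · rw [Finset.card_filter]
    refine Finset.sum_congr rfl fun f _ => ?_
    simp only [Fin.consEquiv, Equiv.coe_fn_mk, Fin.sum_univ_succ, Fin.cons_zero, Fin.cons_succ]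
    refine if_congr ?_ rfl rfl
    omega
  · refine Finset.sum_eq_zero fun f _ => ?_
    simp only [Fin.consEquiv, Equiv.coe_fn_mk, Fin.sum_univ_succ, Fin.cons_zero, Fin.cons_succ]
    rw [if_neg]
    omega

lemma C_eq_zero (m k L : ℕ) (h : k < L) : C m k L = 0 := by
  unfold C
  rw [Finset.card_eq_zero, Finset.filter_eq_empty_iff]
  intro f _
  rw [Finset.sum_add_distrib]
  simp
  omega

lemma C_zero (m k : ℕ) : C m (k + 1) 0 = 0 := by
  simp [C]

lemma QQ_coeff (m k : ℕ) : ∀ s, (QQ m k).coeff s = if s ≤ k then (C m k (k - s) : ℤ) else 0 := by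
  induction k using Nat.strong_induction_on with
  | _ k ih =>
  intro s
  cases k with
  | zero =>
    rw [QQ, coeff_one]
    by_cases h : s = 0 <;> simp [h, C]
  | succ k =>
    rw [QQ_succ, finsetSum_coeff]
    have hc : ∀ j ∈ Finset.range m, (if j ≤ k then X ^ j * QQ m (k - j) else 0 : ℤ[X]).coeff s
        = if s ≤ k then (((if j ≤ k then C m (k - j) (k - s) else 0 : ℕ)) : ℤ) else 0 := by
      intro j _
      by_cases h : j ≤ k
      · rw [if_pos h, if_pos h, coeff_X_pow_mul', ih (k - j) (by omega)]
        by_cases h1 : j ≤ s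
        · rw [if_pos h1]
          by_cases h2 : s ≤ k
          · rw [if_pos (by omega), if_pos h2, show k - j - (s - j) = k - s by omega]
          · rw [if_neg (by omega), if_neg h2]
        · rw [if_neg h1, if_pos (by omega), C_eq_zero _ _ _ (by omega)]; rfl
      · simp [h]
    rw [Finset.sum_congr rfl hc]
    by_cases h : s ≤ k
    · simp only [if_pos h]
      rw [if_pos (by omega), show k + 1 - s = k - s + 1 by omega, C_succ]
      push_cast
      rfl
    · simp only [if_neg h]
      by_cases h2 : s ≤ k + 1
      · rw [if_pos h2, show k + 1 - s = 0 by omega, C_zero]; simp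
      · rw [if_neg h2]; simp

end

theorem stmt_10 (k m n ℓ : ℕ) (hk : 2 ≤ k) (hm : 2 ≤ m)
    (hn : k + (k + m - 1) / m ≤ n)
    (hℓ1 : (k + m - 1) / m ≤ ℓ) (hℓ2 : ℓ ≤ (n - 1) / 2) :
    C m k (n - ℓ) ≤ C m k ℓ := by
  by_cases hL : k < n - ℓ
  · rw [C_eq_zero _ _ _ hL]; exact Nat.zero_le _
  obtain ⟨d, rfl⟩ : ∃ d, m = d + 1 := ⟨m - 1, by omega⟩
  have hdiv : (k + (d + 1) - 1) / (d + 1) = (k - 1) / (d + 1) + 1 := by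
    rw [show k + (d + 1) - 1 = (k - 1) + (d + 1) by omega, Nat.add_div_right _ (by omega)]
  rw [hdiv] at hn
  have hdm := Nat.div_add_mod (k - 1) (d + 1)
  have hlt := Nat.mod_lt (k - 1) (show d + 1 > 0 by omega)
  set c := (k - 1) / (d + 1)
  set i := (k - 1) % (d + 1)
  have e1 : (d + 1) * c = c * d + c := by ring
  have e2 : c * (d + 1) = c * d + c := by ring
  have hF := (QQ_FF d c i (by omega)).2 (k - (n - ℓ)) (k - ℓ) (by omega) (by omega)
  rw [show c * (d + 1) + 1 + i = k by omega, QQ_coeff, QQ_coeff, if_pos (by omega),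
    if_pos (by omega), show k - (k - (n - ℓ)) = n - ℓ by omega,
    show k - (k - ℓ) = ℓ by omega] at hF
  exact_mod_cast hF
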